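/- Let D be an ADF, let v and v' be interpretations of D with v ≤_i v', and let a be an argument that is strongly acceptable (resp. strongly deniable) with respect to v and a least set S for a. Then a is also strongly acceptable (resp. strongly deniable) with respect to v' and the set S. -/

import Mathlib

/-!
Passing from `v` to a larger `v'` keeps every decided value, so `v|_P ≤_i v'|_P` for each `P`, and
every completion of `v'|_P` also completes `v|_P`. Hence each witness set `P` in a derivation of
strong acceptability or deniability with respect to `v` serves unchanged for `v'`, and the claim
follows by induction on the derivation, with the same `S` and the same excluded sets.
-/

/-- Three truth values: true, false, undecided. -/
inductive TV : Type
  | t | f | u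
deriving DecidableEq, Repr

/-- The information order on truth values: u <_i t and u <_i f. -/
def TV.ile (x y : TV) : Prop := x = TV.u ∨ x = y

/-- The information order on interpretations, extended pointwise. -/
def ILE {A : Type*} (v w : A → TV) : Prop := ∀ a, TV.ile (v a) (w a)

/-- An abstract dialectical framework on a set of arguments `A`:
each argument `a` has an acceptance condition `C a : (A → Bool) → Bool`. -/
structure ADF (A : Type*) where
  C : A → (A → Bool) → Bool

/-- The trivial interpretation mapping every argument to undecided. -/
def trivialInterp (A : Type*) : A → TV := fun _ => TV.u

/-- The parents of `a` are the arguments on which its acceptance condition depends. -/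
def ADF.parents {A : Type*} [DecidableEq A] (D : ADF A) (a : A) : Set A :=
  {b | ∃ w : A → Bool, D.C a w ≠ D.C a (Function.update w b (!w b))}

/-- A two-valued assignment `w` completes a three-valued interpretation `v`. -/
def Completes {A : Type*} (w : A → Bool) (v : A → TV) : Prop :=
  ∀ b, (v b = TV.t → w b = true) ∧ (v b = TV.f → w b = false)

/-- `φ` is irrefutable under `v`: every completion of `v` makes `φ` true. -/
def Irrefutable {A : Type*} (φ : (A → Bool) → Bool) (v : A → TV) : Prop :=
  ∀ w : A → Bool, Completes w v → φ w = true

/-- `φ` is unsatisfiable under `v`: every completion of `v` makes `φ` false. -/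
def Unsat {A : Type*} (φ : (A → Bool) → Bool) (v : A → TV) : Prop :=
  ∀ w : A → Bool, Completes w v → φ w = false

open Classical in
/-- The characteristic operator Γ_D of an ADF. -/
noncomputable def Gamma {A : Type*} (D : ADF A) (v : A → TV) : A → TV := fun a =>
  if Irrefutable (D.C a) v then TV.t
  else if Unsat (D.C a) v then TV.f
  else TV.u

open Classical in
/-- `v|_P`: agrees with `v` on `P` and is undecided elsewhere. -/
noncomputable def restrictTV {A : Type*} (v : A → TV) (P : Set A) : A → TV :=
  fun b => if b ∈ P then v b else TV.u

/-- Strong acceptability/deniability of an argument with respect to interpretation `v`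
and set `S`, relative to an excluded set `E` (the first index). An argument `a` with
`v a = t` (resp. `v a = f`) is strongly acceptable (resp. strongly deniable) iff there is
`P ⊆ (parents a ∩ S) \ E` with `φ_a^{v|_P}` irrefutable (resp. unsatisfiable) and every
`p ∈ P` strongly acceptable/deniable relative to `E ∪ {p}`. -/
inductive SJrel {A : Type*} [DecidableEq A] (D : ADF A) (v : A → TV) (S : Set A) :
    Set A → A → Prop
  | acc (E : Set A) (a : A) (P : Set A)
      (ha : v a = TV.t)
      (hP : P ⊆ (D.parents a ∩ S) \ E)
      (hirr : Irrefutable (D.C a) (restrictTV v P))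
      (hrec : ∀ p ∈ P, SJrel D v S (E ∪ {p}) p) : SJrel D v S E a
  | den (E : Set A) (a : A) (P : Set A)
      (ha : v a = TV.f)
      (hP : P ⊆ (D.parents a ∩ S) \ E)
      (hunsat : Unsat (D.C a) (restrictTV v P))
      (hrec : ∀ p ∈ P, SJrel D v S (E ∪ {p}) p) : SJrel D v S E a

/-- `a` is strongly acceptable/deniable w.r.t. `v` and `S`
(i.e., relative to the excluded set `{a}`). -/
def StronglyJustified {A : Type*} [DecidableEq A] (D : ADF A) (v : A → TV)
    (S : Set A) (a : A) : Prop :=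
  SJrel D v S {a} a

/-- `S` is a least set for `a` with respect to `v`. -/
def LeastSet {A : Type*} [DecidableEq A] (D : ADF A) (v : A → TV)
    (a : A) (S : Set A) : Prop :=
  StronglyJustified D v S a ∧
  ∀ S' : Set A, S'.ncard < S.ncard → ¬ StronglyJustified D v S' a

/-- An interpretation is strongly admissible iff every argument assigned `t`/`f`
is strongly acceptable/deniable w.r.t. `v` and some set `S`. -/
def StronglyAdmissible {A : Type*} [DecidableEq A] (D : ADF A) (v : A → TV) : Prop :=
  ∀ a : A, v a ≠ TV.u → ∃ S : Set A, StronglyJustified D v S a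

/-- `g` is the grounded interpretation of `D`: the least fixed point of `Γ_D`. -/
def IsGrounded {A : Type*} (D : ADF A) (g : A → TV) : Prop :=
  Gamma D g = g ∧ ∀ w : A → TV, Gamma D w = w → ILE g w

/-- An interpretation is admissible iff `v ≤_i Γ_D(v)`. -/
def Admissible {A : Type*} (D : ADF A) (v : A → TV) : Prop :=
  ILE v (Gamma D v)

/-- An interpretation is conflict-free. -/
def ConflictFree {A : Type*} (D : ADF A) (v : A → TV) : Prop :=
  ∀ a : A, (v a = TV.t → ∃ w : A → Bool, Completes w v ∧ D.C a w = true) ∧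
           (v a = TV.f → Unsat (D.C a) v)

/-- The join of two interpretations: take `v`'s value where defined, else `w`'s. -/
def joinI {A : Type*} (v w : A → TV) : A → TV :=
  fun a => if v a = TV.u then w a else v a

theorem ILE.eq_of_ne_u {A : Type*} {v v' : A → TV} (hle : ILE v v') {b : A}
    (hb : v b ≠ TV.u) : v' b = v b :=
  ((hle b).resolve_left hb).symm

theorem ILE.restrictTV {A : Type*} {v v' : A → TV} (hle : ILE v v') (P : Set A) :
    ILE (restrictTV v P) (restrictTV v' P) := by
  intro b
  by_cases hb : b ∈ P
  · simpa [_root_.restrictTV, hb] using hle b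
  · exact Or.inl (by simp [_root_.restrictTV, hb])

theorem Completes.of_ile {A : Type*} {v v' : A → TV} {w : A → Bool} (hle : ILE v v')
    (hw : Completes w v') : Completes w v := by
  intro b
  constructor
  · intro hb
    exact (hw b).1 ((hle.eq_of_ne_u (by simp [hb])).trans hb)
  · intro hb
    exact (hw b).2 ((hle.eq_of_ne_u (by simp [hb])).trans hb)

/-- Monotonicity in the interpretation holds for an arbitrary excluded set and an arbitrary `S`,
not only for a least one. -/
theorem SJrel.mono_interp {A : Type*} [DecidableEq A] {D : ADF A} {v v' : A → TV}
    {S E : Set A} {a : A} (hle : ILE v v') (h : SJrel D v S E a) : SJrel D v' S E a := by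
  induction h with
  | acc E a P ha hP hirr _ ih =>
    exact SJrel.acc E a P ((hle.eq_of_ne_u (by simp [ha])).trans ha) hP
      (fun w hw => hirr w (hw.of_ile (hle.restrictTV P))) ih
  | den E a P ha hP hunsat _ ih =>
    exact SJrel.den E a P ((hle.eq_of_ne_u (by simp [ha])).trans ha) hP
      (fun w hw => hunsat w (hw.of_ile (hle.restrictTV P))) ih

/-- Strong acceptability/deniability w.r.t. a least set persists
when passing to an informationally greater interpretation. -/
theorem strongly_justified_mono {A : Type*} [Fintype A] [DecidableEq A] (D : ADF A)
    (v v' : A → TV) (a : A) (S : Set A)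
    (hle : ILE v v') (hleast : LeastSet D v a S) :
    StronglyJustified D v' S a := by
  exact SJrel.mono_interp hle hleast.1
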